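/- arXiv:1803.11073 — 3 statements merged into one kernel-verified Lean document; each statement's English description precedes it below -/
import Mathlib

section
/- Let X be an infinite separable locally compact metric space and let f : X → X be a continuous map. Suppose that for every pair of nonempty open sets U, V ⊆ X the set N(U, V) contains two consecutive positive integers. Then f is topologically transitive and for every nonempty open set U ⊆ X the set N(U, U) contains arbitrarily long strings of consecutive positive integers: for every L ≥ 1 there exists m ≥ 1 such that m, m+1, …, m+L−1 all belong to N(U, U). -/
/-- `NSet f U V` is the set `N(U,V) = {n ≥ 1 : fⁿ(U) ∩ V ≠ ∅}`. -/
def NSet {X : Type*} (f : X → X) (U V : Set X) : Set ℕ :=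
  {n : ℕ | 1 ≤ n ∧ (f^[n] '' U ∩ V).Nonempty}

/-- `f` is (topologically) transitive. -/
def TopTransitive {X : Type*} [TopologicalSpace X] (f : X → X) : Prop :=
  ∀ U V : Set X, IsOpen U → IsOpen V → U.Nonempty → V.Nonempty → (NSet f U V).Nonempty

/-!
Given nonempty open `U` and `V`, choose `n ∈ N(U, V)`, put `C = U ∩ f⁻ⁿ(V)`, and choose `p` with
`p, p + 1 ∈ N(C, C)`. Then `A = C ∩ f⁻ᵖ(C)` and `B = C ∩ f⁻⁽ᵖ⁺¹⁾(C)` are nonempty and open. If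
`x ∈ A` and `fᵐ(x) ∈ B`, then `x` witnesses `m + n ∈ N(U, V)`, while `fᵖ(x)` witnesses
`m + n + 1 ∈ N(U, V)`. So a string of `L` consecutive integers in `N(A, B)` yields a string of
`L + 1` in `N(U, V)`, and induction on `L` applies to all pairs of open sets simultaneously.
-/

open Set

/-- A thick set of natural numbers: one containing arbitrarily long strings of consecutive
integers. The strings are `m, …, m + k`, hence never empty. -/
def IsThick (S : Set ℕ) : Prop :=
  ∀ k, ∃ m, ∀ i ≤ k, m + i ∈ S

section

variable {X : Type*} {f : X → X} {U V A B : Set X} {a m n : ℕ}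

theorem mem_nSet_iff : n ∈ NSet f U V ↔ 1 ≤ n ∧ (U ∩ f^[n] ⁻¹' V).Nonempty :=
  and_congr_right' image_inter_nonempty_iff

theorem add_mem_nSet_of_mapsTo (hA : MapsTo f^[a] A U) (hB : MapsTo f^[a + n] B V)
    (hm : m ∈ NSet f A B) : m + n ∈ NSet f U V := by
  obtain ⟨hm_pos, x, hxA, hxB⟩ := mem_nSet_iff.1 hm
  refine mem_nSet_iff.2 ⟨hm_pos.trans (Nat.le_add_right m n), f^[a] x, hA hxA, ?_⟩
  have hV : f^[a + n] (f^[m] x) ∈ V := hB hxB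
  rwa [← Function.iterate_add_apply, show a + n + m = m + n + a by ring,
    Function.iterate_add_apply] at hV

variable [TopologicalSpace X]

theorem exists_isOpen_add_mem_nSet (hf : Continuous f) (htrans : TopTransitive f)
    (hrec : ∀ W : Set X, IsOpen W → W.Nonempty → ∃ p, p ∈ NSet f W W ∧ p + 1 ∈ NSet f W W)
    (hU : IsOpen U) (hV : IsOpen V) (hUne : U.Nonempty) (hVne : V.Nonempty) :
    ∃ (A B : Set X) (n : ℕ), IsOpen A ∧ IsOpen B ∧ A.Nonempty ∧ B.Nonempty ∧
      ∀ m ∈ NSet f A B, m + n ∈ NSet f U V ∧ m + (n + 1) ∈ NSet f U V := by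
  have isOpen_inter_preimage {S T : Set X} (hS : IsOpen S) (hT : IsOpen T) (k : ℕ) :
      IsOpen (S ∩ f^[k] ⁻¹' T) := hS.inter (hT.preimage (hf.iterate k))
  obtain ⟨n, hn⟩ := htrans U V hU hV hUne hVne
  set C := U ∩ f^[n] ⁻¹' V
  have hC : IsOpen C := isOpen_inter_preimage hU hV n
  obtain ⟨p, hp, hp_succ⟩ := hrec C hC (mem_nSet_iff.1 hn).2
  refine ⟨C ∩ f^[p] ⁻¹' C, C ∩ f^[p + 1] ⁻¹' C, n, isOpen_inter_preimage hC hC p,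
    isOpen_inter_preimage hC hC (p + 1), (mem_nSet_iff.1 hp).2, (mem_nSet_iff.1 hp_succ).2,
    fun m hm => ⟨?_, ?_⟩⟩
  · refine add_mem_nSet_of_mapsTo (a := 0) (fun x hx => hx.1.1) (fun x hx => ?_) hm
    rw [Nat.zero_add]
    exact hx.1.2
  · refine add_mem_nSet_of_mapsTo (a := p) (fun x hx => hx.2.1) (fun x hx => ?_) hm
    rw [show p + (n + 1) = n + (p + 1) by ring, Function.iterate_add_apply]
    exact hx.2.2

theorem transitive_and_long_strings_of_consecutive_general (hf : Continuous f)
    (htrans : TopTransitive f)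
    (hrec : ∀ W : Set X, IsOpen W → W.Nonempty → ∃ p, p ∈ NSet f W W ∧ p + 1 ∈ NSet f W W)
    (hU : IsOpen U) (hV : IsOpen V) (hUne : U.Nonempty) (hVne : V.Nonempty) :
    IsThick (NSet f U V) := by
  intro k
  induction k generalizing U V with
  | zero =>
    obtain ⟨n, hn⟩ := htrans U V hU hV hUne hVne
    exact ⟨n, fun i hi => by rwa [Nat.le_zero.1 hi]⟩
  | succ k ih =>
    obtain ⟨A, B, n, hA, hB, hAne, hBne, hAB⟩ :=
      exists_isOpen_add_mem_nSet hf htrans hrec hU hV hUne hVne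
    obtain ⟨m, hm⟩ := ih hA hB hAne hBne
    refine ⟨m + n, fun i hi => ?_⟩
    rcases Nat.le_succ_iff.1 hi with hik | rfl
    · rw [Nat.add_right_comm]
      exact (hAB _ (hm i hik)).1
    · rw [show m + n + (k + 1) = m + k + (n + 1) by ring]
      exact (hAB _ (hm k le_rfl)).2

end

theorem transitive_and_long_strings_of_consecutive {X : Type*} [MetricSpace X] [Infinite X]
    [TopologicalSpace.SeparableSpace X] [LocallyCompactSpace X]
    (f : X → X) (hf : Continuous f)
    (hcons : ∀ U V : Set X, IsOpen U → IsOpen V → U.Nonempty → V.Nonempty →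
      ∃ n : ℕ, 1 ≤ n ∧ n ∈ NSet f U V ∧ n + 1 ∈ NSet f U V) :
    TopTransitive f ∧
      ∀ U : Set X, IsOpen U → U.Nonempty → ∀ L : ℕ, 1 ≤ L →
        ∃ m : ℕ, 1 ≤ m ∧ ∀ i < L, (m + i) ∈ NSet f U U := by
  have htrans : TopTransitive f := fun U V hU hV hUne hVne =>
    (hcons U V hU hV hUne hVne).imp fun _ hn => hn.2.1
  refine ⟨htrans, fun U hU hUne L _ => ?_⟩
  obtain ⟨m, hm⟩ := transitive_and_long_strings_of_consecutive_general hf htrans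
    (fun W hW hWne => (hcons W W hW hW hWne hWne).imp fun _ hp => hp.2) hU hU hUne hUne L
  exact ⟨m, (hm 0 L.zero_le).1, fun i hi => hm i hi.le⟩
end

section
/- Let X be an infinite separable locally compact metric space and let f : X → X be a continuous map. Suppose f is topologically transitive and for every nonempty open set U ⊆ X and every L ≥ 1 the set N(U, U) contains L consecutive positive integers. Then f is weakly mixing. -/
/-- `f` is (topologically) weakly mixing. -/
def WeaklyMixing {X : Type*} [TopologicalSpace X] (f : X → X) : Prop :=
  ∀ U₁ U₂ V₁ V₂ : Set X, IsOpen U₁ → IsOpen U₂ → IsOpen V₁ → IsOpen V₂ →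
    U₁.Nonempty → U₂.Nonempty → V₁.Nonempty → V₂.Nonempty →
    ∃ n : ℕ, 1 ≤ n ∧ (f^[n] '' U₁ ∩ V₁).Nonempty ∧ (f^[n] '' U₂ ∩ V₂).Nonempty

/-!
Given `U₁, U₂, V₁, V₂`, three uses of transitivity produce a nonempty open `W ⊆ U₁` and `a, b, c`
with `fᵃ(W) ⊆ U₂`, `fᶜ(W) ⊆ V₁` and `fᵇ⁺ᶜ(W) ⊆ V₂`. A return time `n₁` of `W` gives
`n₁ + c ∈ N(U₁, V₁)`, and a return time `n₂` gives `n₂ + b + c - a ∈ N(U₂, V₂)`. The two times agree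
when `n₁ - n₂ = b - a`, so it is enough that differences of return times exhaust the integers.
-/

section NSet

variable {X : Type*} {f : X → X} {U U' V V' : Set X} {k n : ℕ}

theorem mem_NSet_iff : n ∈ NSet f U V ↔ 1 ≤ n ∧ ∃ x ∈ U, f^[n] x ∈ V :=
  and_congr_right' Set.image_inter_nonempty_iff

theorem NSet_mono (hU : U ⊆ U') (hV : V ⊆ V') : NSet f U V ⊆ NSet f U' V' :=
  fun _ hn ↦ ⟨hn.1, hn.2.mono (Set.inter_subset_inter (Set.image_mono hU) hV)⟩

theorem add_mem_NSet_of_mem_preimage (h : n ∈ NSet f U (f^[k] ⁻¹' V)) : n + k ∈ NSet f U V := by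
  obtain ⟨hn, x, hxU, hxV⟩ := mem_NSet_iff.1 h
  refine mem_NSet_iff.2 ⟨by omega, x, hxU, ?_⟩
  rwa [add_comm, Function.iterate_add_apply]

theorem mem_NSet_of_add_mem_preimage (hn : 1 ≤ n)
    (h : n + k ∈ NSet f (f^[k] ⁻¹' U) V) : n ∈ NSet f U V := by
  obtain ⟨-, x, hxU, hxV⟩ := mem_NSet_iff.1 h
  exact mem_NSet_iff.2 ⟨hn, f^[k] x, hxU, by rwa [← Function.iterate_add_apply]⟩

end NSet

section Transitive

variable {X : Type*} [TopologicalSpace X] {f : X → X} {U V U₁ U₂ V₁ V₂ : Set X}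

theorem TopTransitive.exists_isOpen_inter_preimage (htrans : TopTransitive f) (hf : Continuous f)
    (hU : IsOpen U) (hV : IsOpen V) (hU' : U.Nonempty) (hV' : V.Nonempty) :
    ∃ k, IsOpen (U ∩ f^[k] ⁻¹' V) ∧ (U ∩ f^[k] ⁻¹' V).Nonempty := by
  obtain ⟨k, hk⟩ := htrans U V hU hV hU' hV'
  exact ⟨k, hU.inter (hV.preimage (hf.iterate k)), (mem_NSet_iff.1 hk).2⟩

theorem TopTransitive.exists_isOpen_add_mem_NSet_inter (htrans : TopTransitive f)
    (hf : Continuous f) (hU₁ : IsOpen U₁) (hU₂ : IsOpen U₂) (hV₁ : IsOpen V₁) (hV₂ : IsOpen V₂)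
    (hU₁' : U₁.Nonempty) (hU₂' : U₂.Nonempty) (hV₁' : V₁.Nonempty) (hV₂' : V₂.Nonempty) :
    ∃ (W : Set X) (a b c : ℕ), IsOpen W ∧ W.Nonempty ∧
      ∀ n₁ ∈ NSet f W W, ∀ n₂ ∈ NSet f W W, n₁ + a = n₂ + b →
        n₁ + c ∈ NSet f U₁ V₁ ∩ NSet f U₂ V₂ := by
  obtain ⟨a, hU, hU'⟩ := htrans.exists_isOpen_inter_preimage hf hU₁ hU₂ hU₁' hU₂'
  obtain ⟨b, hV, hV'⟩ := htrans.exists_isOpen_inter_preimage hf hV₁ hV₂ hV₁' hV₂'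
  obtain ⟨c, hW, hW'⟩ := htrans.exists_isOpen_inter_preimage hf hU hV hU' hV'
  refine ⟨_, a, b, c, hW, hW', fun n₁ hn₁ n₂ hn₂ hab ↦ ?_⟩
  have hmem₁ : n₁ + c ∈ NSet f U₁ V₁ :=
    add_mem_NSet_of_mem_preimage (NSet_mono (fun _ hx ↦ hx.1.1) (fun _ hx ↦ hx.2.1) hn₁)
  have hmem₂ : n₂ + c + b ∈ NSet f (f^[a] ⁻¹' U₂) V₂ :=
    add_mem_NSet_of_mem_preimage <| add_mem_NSet_of_mem_preimage <|
      NSet_mono (fun _ hx ↦ hx.1.2) (fun _ hx ↦ hx.2.2) hn₂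
  have htime : n₂ + c + b = n₁ + c + a := by omega
  exact ⟨hmem₁, mem_NSet_of_add_mem_preimage hmem₁.1 (htime ▸ hmem₂)⟩

end Transitive

theorem exists_mem_add_eq_add {S : Set ℕ} (hS : ∀ k, ∃ n ∈ S, n + k ∈ S) (a b : ℕ) :
    ∃ n₁ ∈ S, ∃ n₂ ∈ S, n₁ + a = n₂ + b := by
  rcases le_total a b with hab | hba
  · obtain ⟨n, hn, hnk⟩ := hS (b - a)
    exact ⟨n + (b - a), hnk, n, hn, by omega⟩
  · obtain ⟨n, hn, hnk⟩ := hS (a - b)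
    exact ⟨n, hn, n + (a - b), hnk, by omega⟩

theorem weaklyMixing_of_transitive_long_strings_general {X : Type*} [TopologicalSpace X]
    {f : X → X} (hf : Continuous f) (htrans : TopTransitive f)
    (hpairs : ∀ U : Set X, IsOpen U → U.Nonempty →
      ∀ k, ∃ n ∈ NSet f U U, n + k ∈ NSet f U U) :
    WeaklyMixing f := by
  intro U₁ U₂ V₁ V₂ hU₁ hU₂ hV₁ hV₂ hU₁' hU₂' hV₁' hV₂'
  obtain ⟨W, a, b, c, hW, hW', hreturn⟩ :=
    htrans.exists_isOpen_add_mem_NSet_inter hf hU₁ hU₂ hV₁ hV₂ hU₁' hU₂' hV₁' hV₂'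
  obtain ⟨n₁, hn₁, n₂, hn₂, hab⟩ := exists_mem_add_eq_add (hpairs W hW hW') a b
  obtain ⟨⟨hpos, h₁⟩, -, h₂⟩ := hreturn n₁ hn₁ n₂ hn₂ hab
  exact ⟨n₁ + c, hpos, h₁, h₂⟩

theorem weaklyMixing_of_transitive_long_strings {X : Type*} [MetricSpace X] [Infinite X]
    [TopologicalSpace.SeparableSpace X] [LocallyCompactSpace X]
    (f : X → X) (hf : Continuous f) (htrans : TopTransitive f)
    (hlong : ∀ U : Set X, IsOpen U → U.Nonempty → ∀ L : ℕ, 1 ≤ L →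
      ∃ m : ℕ, 1 ≤ m ∧ ∀ i < L, (m + i) ∈ NSet f U U) :
    WeaklyMixing f :=
  weaklyMixing_of_transitive_long_strings_general hf htrans fun U hU hU' k ↦
    let ⟨m, _, hm⟩ := hlong U hU hU' (k + 1) k.succ_pos
    ⟨m, hm 0 k.succ_pos, hm k k.lt_succ_self⟩
end

section
/- Let X be an infinite separable locally compact metric space and let f : X → X be a continuous weakly mixing map. Suppose x₀ ∈ X is a point whose orbit O_f(x₀) = {fⁱ(x₀) : i ≥ 0} has compact closure. Let s ≥ 0 be an integer and let 𝒢 be a family of open subsets of X covering the closure of O_f(x₀). Then there exists a member G ∈ 𝒢 such that for all nonempty open sets W, W′ ⊆ X the set {n ≥ 1 : f^{n+s}(W) ∩ W′ ≠ ∅} ∩ {n ≥ 1 : fⁿ(x₀) ∈ G} is an infinite set of positive integers. -/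
/-- The orbit of `x₀` under `f`. -/
def Orbit {X : Type*} (f : X → X) (x₀ : X) : Set X :=
  Set.range fun i : ℕ => f^[i] x₀

open Filter Function Set

/-- The set `N(U, V)` of times at which an iterate of `f` carries some point of `U` into `V`. -/
def hittingTimes {X : Type*} (f : X → X) (U V : Set X) : Set ℕ :=
  {n | (f^[n] '' U ∩ V).Nonempty}

/-- The filter on `ℕ` generated by the final segments and the sets `N(U, V)`, for `U` and `V`
nonempty and open. The final segments make a property that holds frequently along it hold for
infinitely many times. -/
def hittingFilter {X : Type*} [TopologicalSpace X] (f : X → X) : Filter ℕ :=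
  atTop ⊓ ⨅ p : {U : Set X // IsOpen U ∧ U.Nonempty} × {V : Set X // IsOpen V ∧ V.Nonempty},
    𝓟 (hittingTimes f p.1 p.2)

section HittingTimes

variable {X : Type*} {f : X → X} {U V : Set X} {k n : ℕ}

theorem mem_hittingTimes : n ∈ hittingTimes f U V ↔ ∃ x ∈ U, f^[n] x ∈ V :=
  image_inter_nonempty_iff

theorem mem_hittingTimes_preimage_iterate :
    n ∈ hittingTimes f U (f^[k] ⁻¹' V) ↔ n + k ∈ hittingTimes f U V := by
  simp only [mem_hittingTimes, mem_preimage, ← iterate_add_apply, add_comm]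

theorem hittingTimes_inter_preimage_iterate_subset (U₁ V₁ U₂ V₂ : Set X) (k : ℕ) :
    hittingTimes f (U₁ ∩ f^[k] ⁻¹' U₂) (V₁ ∩ f^[k] ⁻¹' V₂) ⊆
      hittingTimes f U₁ V₁ ∩ hittingTimes f U₂ V₂ := by
  intro n hn
  obtain ⟨x, ⟨hxU₁, hxU₂⟩, hxV₁, hxV₂⟩ := mem_hittingTimes.1 hn
  refine ⟨mem_hittingTimes.2 ⟨x, hxU₁, hxV₁⟩, mem_hittingTimes.2 ⟨f^[k] x, hxU₂, ?_⟩⟩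
  rwa [((Function.Commute.refl f).iterate_iterate n k).eq x]

end HittingTimes

namespace WeaklyMixing

variable {X : Type*} [TopologicalSpace X] {f : X → X} {U V : Set X}

theorem exists_pos_mem_hittingTimes (hwm : WeaklyMixing f) (hU : IsOpen U) (hUne : U.Nonempty)
    (hV : IsOpen V) (hVne : V.Nonempty) : ∃ n, 1 ≤ n ∧ n ∈ hittingTimes f U V :=
  let ⟨n, hn, hUV, _⟩ := hwm U U V V hU hU hV hV hUne hUne hVne hVne
  ⟨n, hn, hUV⟩

theorem denseRange (hwm : WeaklyMixing f) : DenseRange f := by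
  refine dense_iff_inter_open.2 fun V hV hVne ↦ ?_
  obtain ⟨n, hn, hnV⟩ := hwm.exists_pos_mem_hittingTimes hV hVne hV hVne
  obtain ⟨m, rfl⟩ := Nat.exists_eq_add_of_le' hn
  obtain ⟨x, -, hx⟩ := mem_hittingTimes.1 hnV
  rw [iterate_succ_apply'] at hx
  exact ⟨_, hx, mem_range_self _⟩

theorem nonempty_preimage_iterate (hwm : WeaklyMixing f) (hf : Continuous f) (hV : IsOpen V)
    (hVne : V.Nonempty) (k : ℕ) : (f^[k] ⁻¹' V).Nonempty := by
  induction k with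
  | zero => exact hVne
  | succ k ih => exact hwm.denseRange.exists_mem_open (hV.preimage (hf.iterate k)) ih

theorem infinite_hittingTimes (hwm : WeaklyMixing f) (hf : Continuous f) (hU : IsOpen U)
    (hUne : U.Nonempty) (hV : IsOpen V) (hVne : V.Nonempty) : (hittingTimes f U V).Infinite := by
  refine infinite_of_forall_exists_gt fun k ↦ ?_
  obtain ⟨n, hn, hnV⟩ := hwm.exists_pos_mem_hittingTimes hU hUne (hV.preimage (hf.iterate k))
    (hwm.nonempty_preimage_iterate hf hV hVne k)
  exact ⟨n + k, mem_hittingTimes_preimage_iterate.1 hnV, by lia⟩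

theorem exists_hittingTimes_subset_inter (hwm : WeaklyMixing f) (hf : Continuous f)
    {U₁ V₁ U₂ V₂ : Set X} (hU₁ : IsOpen U₁) (hU₁ne : U₁.Nonempty) (hV₁ : IsOpen V₁)
    (hV₁ne : V₁.Nonempty) (hU₂ : IsOpen U₂) (hU₂ne : U₂.Nonempty) (hV₂ : IsOpen V₂)
    (hV₂ne : V₂.Nonempty) :
    ∃ U V : Set X, (IsOpen U ∧ U.Nonempty) ∧ (IsOpen V ∧ V.Nonempty) ∧
      hittingTimes f U V ⊆ hittingTimes f U₁ V₁ ∩ hittingTimes f U₂ V₂ := by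
  -- Mixing is applied to the crossed pairs `(U₁, U₂)` and `(V₁, V₂)`.
  obtain ⟨k, -, hU, hV⟩ := hwm U₁ V₁ U₂ V₂ hU₁ hV₁ hU₂ hV₂ hU₁ne hV₁ne hU₂ne hV₂ne
  exact ⟨U₁ ∩ f^[k] ⁻¹' U₂, V₁ ∩ f^[k] ⁻¹' V₂,
    ⟨hU₁.inter (hU₂.preimage (hf.iterate k)), image_inter_nonempty_iff.1 hU⟩,
    ⟨hV₁.inter (hV₂.preimage (hf.iterate k)), image_inter_nonempty_iff.1 hV⟩,
    hittingTimes_inter_preimage_iterate_subset U₁ V₁ U₂ V₂ k⟩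

theorem hittingFilter_neBot (hwm : WeaklyMixing f) (hf : Continuous f) :
    (hittingFilter f).NeBot := by
  rw [hittingFilter]
  cases isEmpty_or_nonempty
    ({U : Set X // IsOpen U ∧ U.Nonempty} × {V : Set X // IsOpen V ∧ V.Nonempty})
  · rw [iInf_of_empty, inf_top_eq]
    exact atTop_neBot
  · rw [inf_iInf]
    refine iInf_neBot_of_directed ?_ ?_
    · rintro ⟨⟨U₁, hU₁, hU₁ne⟩, V₁, hV₁, hV₁ne⟩ ⟨⟨U₂, hU₂, hU₂ne⟩, V₂, hV₂, hV₂ne⟩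
      obtain ⟨U, V, hU, hV, hUV⟩ := hwm.exists_hittingTimes_subset_inter hf
        hU₁ hU₁ne hV₁ hV₁ne hU₂ hU₂ne hV₂ hV₂ne
      obtain ⟨hUV₁, hUV₂⟩ := subset_inter_iff.1 hUV
      exact ⟨⟨⟨U, hU⟩, V, hV⟩, inf_le_inf_left _ (principal_mono.2 hUV₁),
        inf_le_inf_left _ (principal_mono.2 hUV₂)⟩
    · rintro ⟨⟨U, hU, hUne⟩, V, hV, hVne⟩
      exact frequently_mem_iff_neBot.1
        (Nat.frequently_atTop_iff_infinite.2 (hwm.infinite_hittingTimes hf hU hUne hV hVne))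

theorem eventually_add_mem_hittingTimes (hwm : WeaklyMixing f) (hf : Continuous f) (hU : IsOpen U)
    (hUne : U.Nonempty) (hV : IsOpen V) (hVne : V.Nonempty) (s : ℕ) :
    ∀ᶠ n in hittingFilter f, n + s ∈ hittingTimes f U V := by
  have hVs : IsOpen (f^[s] ⁻¹' V) ∧ (f^[s] ⁻¹' V).Nonempty :=
    ⟨hV.preimage (hf.iterate s), hwm.nonempty_preimage_iterate hf hV hVne s⟩
  have hmem : ∀ᶠ n in hittingFilter f, n ∈ hittingTimes f U (f^[s] ⁻¹' V) :=
    mem_inf_of_right (mem_iInf_of_mem ⟨⟨U, hU, hUne⟩, _, hVs⟩ (mem_principal_self _))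
  exact hmem.mono fun n ↦ mem_hittingTimes_preimage_iterate.1

end WeaklyMixing

theorem exists_mem_cover_frequently {ι Y : Type*} [TopologicalSpace Y] {l : Filter ι} {u : ι → Y}
    {K : Set Y} (hK : IsCompact K) (hu : ∃ᶠ i in l, u i ∈ K) {𝒢 : Set (Set Y)}
    (h𝒢open : ∀ G ∈ 𝒢, IsOpen G) (h𝒢cover : K ⊆ ⋃₀ 𝒢) : ∃ G ∈ 𝒢, ∃ᶠ i in l, u i ∈ G := by
  obtain ⟨y, hyK, hy⟩ := hK.exists_mapClusterPt_of_frequently hu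
  obtain ⟨G, hG, hyG⟩ := h𝒢cover hyK
  exact ⟨G, hG, hy.frequently ((h𝒢open G hG).mem_nhds hyG)⟩

theorem good_cover_member_infinite_returns_general {X Y : Type*} [TopologicalSpace X]
    [TopologicalSpace Y] {f : X → X} (hf : Continuous f) (hwm : WeaklyMixing f) {K : Set Y}
    (hK : IsCompact K) {u : ℕ → Y} (hu : ∀ᶠ n in atTop, u n ∈ K) {𝒢 : Set (Set Y)}
    (h𝒢open : ∀ G ∈ 𝒢, IsOpen G) (h𝒢cover : K ⊆ ⋃₀ 𝒢) :
    ∃ G ∈ 𝒢, ∀ (s : ℕ) (W W' : Set X), IsOpen W → IsOpen W' → W.Nonempty → W'.Nonempty →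
      ({n : ℕ | 1 ≤ n ∧ (f^[n + s] '' W ∩ W').Nonempty} ∩ {n : ℕ | 1 ≤ n ∧ u n ∈ G}).Infinite := by
  have : (hittingFilter f).NeBot := hwm.hittingFilter_neBot hf
  have hle : hittingFilter f ≤ atTop := inf_le_left
  obtain ⟨G, hG, hfreq⟩ :=
    exists_mem_cover_frequently hK (hu.filter_mono hle).frequently h𝒢open h𝒢cover
  refine ⟨G, hG, fun s W W' hW hW' hWne hW'ne ↦ Nat.frequently_atTop_iff_infinite.1 ?_⟩
  have hhit := hwm.eventually_add_mem_hittingTimes hf hW hWne hW' hW'ne s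
  have hpos : ∀ᶠ n in hittingFilter f, 1 ≤ n := (eventually_ge_atTop 1).filter_mono hle
  refine Frequently.filter_mono ?_ hle
  exact (hfreq.and_eventually (hhit.and hpos)).mono
    fun n ⟨hnG, hnW, hn⟩ ↦ ⟨⟨hn, hnW⟩, hn, hnG⟩

theorem good_cover_member_infinite_returns {X : Type*} [MetricSpace X] [Infinite X]
    [TopologicalSpace.SeparableSpace X] [LocallyCompactSpace X]
    (f : X → X) (hf : Continuous f) (hwm : WeaklyMixing f)
    (x₀ : X) (horb : IsCompact (closure (Orbit f x₀)))
    (s : ℕ) (𝒢 : Set (Set X)) (h𝒢open : ∀ G ∈ 𝒢, IsOpen G)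
    (h𝒢cover : closure (Orbit f x₀) ⊆ ⋃₀ 𝒢) :
    ∃ G ∈ 𝒢, ∀ W W' : Set X, IsOpen W → IsOpen W' → W.Nonempty → W'.Nonempty →
      ({n : ℕ | 1 ≤ n ∧ (f^[n + s] '' W ∩ W').Nonempty} ∩
        {n : ℕ | 1 ≤ n ∧ f^[n] x₀ ∈ G}).Infinite := by
  obtain ⟨G, hG, hinf⟩ := good_cover_member_infinite_returns_general hf hwm horb
    (.of_forall fun n ↦ subset_closure (mem_range_self n)) h𝒢open h𝒢cover
  exact ⟨G, hG, hinf s⟩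
end
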